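/- If H₁ and H₂ are subgroups of PSL(2,7) of index 7 that are not conjugate in PSL(2,7), then for every conjugacy class C of PSL(2,7) one has |C ∩ H₁| = |C ∩ H₂|; that is, (H₁, H₂) is an almost conjugate (Sunada) pair in PSL(2,7). -/

import Mathlib

/-- `SL(2, 𝔽_p)`: the group of 2×2 matrices of determinant 1 over `ℤ/pℤ`. -/
abbrev SL2 (p : ℕ) := Matrix.SpecialLinearGroup (Fin 2) (ZMod p)

/-- `PSL(2, 𝔽_p)`: the quotient of `SL(2, 𝔽_p)` by its center `{±I}`. -/
abbrev PSL2 (p : ℕ) := SL2 p ⧸ Subgroup.center (SL2 p)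

open MulAction

namespace PSL7

abbrev V := {v : ZMod 7 × ZMod 7 × ZMod 7 × ZMod 7 // v.1 * v.2.2.2 - v.2.1 * v.2.2.1 = 1}

theorem aux_rep : ∀ a b c d : ZMod 7, a * d - b * c = 1 → (a + d)^2 ≠ 4 →
    ∃ x y : ZMod 7, x * (c * x + d * y) - y * (a * x + b * y) = 1 := by
  decide +kernel

/-- the expected number of fixed points, in terms of the matrix entries -/
def W (p q r : ℕ) (a b c d : ZMod 7) : ℕ :=
  p * (if a + d = 0 then 1 else 0) + q * (if (a + d)^2 = 1 then 1 else 0)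
  + r * (if (a + d)^2 = 2 then 1 else 0)
  + 7 * (if (a + d)^2 = 4 ∧ b = 0 ∧ c = 0 then 1 else 0)

theorem sum_W (p q r : ℕ) : ∑ v : V, W p q r v.1.1 v.1.2.1 v.1.2.2.1 v.1.2.2.2
    = 42 * p + 112 * q + 84 * r + 14 := by
  have e0 : ∑ v : V, (if v.1.1 + v.1.2.2.2 = 0 then 1 else 0) = 42 := by decide +kernel
  have e1 : ∑ v : V, (if (v.1.1 + v.1.2.2.2)^2 = 1 then 1 else 0) = 112 := by decide +kernel
  have e2 : ∑ v : V, (if (v.1.1 + v.1.2.2.2)^2 = 2 then 1 else 0) = 84 := by decide +kernel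
  have e3 : ∑ v : V, (if (v.1.1 + v.1.2.2.2)^2 = 4 ∧ v.1.2.1 = 0 ∧ v.1.2.2.1 = 0
      then 1 else 0) = 2 := by decide +kernel
  simp only [W, Finset.sum_add_distrib, ← Finset.mul_sum]
  rw [e0, e1, e2, e3]; ring

theorem card_V : Fintype.card V = 336 := by decide +kernel

def eqv : SL2 7 ≃ V where
  toFun A := ⟨(A 0 0, A 0 1, A 1 0, A 1 1), by
    have := A.2; rw [Matrix.det_fin_two] at this; exact this⟩
  invFun v := ⟨!![v.1.1, v.1.2.1; v.1.2.2.1, v.1.2.2.2], by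
    rw [Matrix.det_fin_two]; simpa using v.2⟩
  left_inv A := by
    ext i j; fin_cases i <;> fin_cases j <;> rfl
  right_inv v := by
    rfl

/-- companion matrix -/
def comp (t : ZMod 7) : SL2 7 := ⟨!![0, -1; 1, t], by simp [Matrix.det_fin_two]⟩

theorem det_eq (A : SL2 7) : A 0 0 * A 1 1 - A 0 1 * A 1 0 = 1 := by
  have := A.2; rw [Matrix.det_fin_two] at this; exact this

theorem conj_comp (A : SL2 7) (h : (A 0 0 + A 1 1)^2 ≠ 4) :
    IsConj A (comp (A 0 0 + A 1 1)) := by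
  obtain ⟨x, y, hxy⟩ := aux_rep _ _ _ _ (det_eq A) h
  have hd := det_eq A
  let B : SL2 7 := ⟨!![x, A 0 0 * x + A 0 1 * y; y, A 1 0 * x + A 1 1 * y], by
    rw [Matrix.det_fin_two]; simp; linear_combination hxy⟩
  refine IsConj.symm (isConj_iff.2 ⟨B, ?_⟩)
  rw [mul_inv_eq_iff_eq_mul]
  apply Subtype.ext
  change !![x, A 0 0 * x + A 0 1 * y; y, A 1 0 * x + A 1 1 * y] * !![0, -1; 1, A 0 0 + A 1 1]
    = A.1 * !![x, A 0 0 * x + A 0 1 * y; y, A 1 0 * x + A 1 1 * y]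
  ext i j
  fin_cases i <;> fin_cases j <;>
    simp [Matrix.mul_apply, Fin.sum_univ_two]
  · linear_combination x * hd
  · linear_combination y * hd

abbrev pr : SL2 7 →* PSL2 7 := QuotientGroup.mk' _

theorem pr_surj : Function.Surjective pr := QuotientGroup.mk'_surjective _

theorem pr_eq_one_of (A : SL2 7) (h : (A 0 0 + A 1 1)^2 = 4) (hb : A 0 1 = 0) (hc : A 1 0 = 0) :
    pr A = 1 := by
  have hd := det_eq A
  have key : ∀ a d : ZMod 7, a * d = 1 → (a+d)^2 = 4 → a = d ∧ a^2 = 1 := by decide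
  obtain ⟨h1, h2⟩ := key (A 0 0) (A 1 1) (by rw [hb] at hd; simpa using hd) h
  rw [QuotientGroup.mk'_apply, QuotientGroup.eq_one_iff, Matrix.SpecialLinearGroup.mem_center_iff]
  refine ⟨A 0 0, by simpa using h2, ?_⟩
  ext i j
  fin_cases i <;> fin_cases j <;> simp [hb, hc, h1]

theorem of_pr_eq_one (A : SL2 7) (h : pr A = 1) : A 0 1 = 0 ∧ A 1 0 = 0 := by
  rw [QuotientGroup.mk'_apply, QuotientGroup.eq_one_iff,
    Matrix.SpecialLinearGroup.mem_center_iff] at h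
  obtain ⟨r, -, h⟩ := h
  constructor
  · rw [← h]; simp
  · rw [← h]; simp

theorem pr_neg (A : SL2 7) : pr (-A) = pr A := by
  have h1 : pr (-1 : SL2 7) = 1 := pr_eq_one_of _ (by simp; decide) (by simp) (by simp)
  rw [← neg_one_mul, map_mul, h1, one_mul]

theorem pow7_aux (A : SL2 7) (h : A 0 0 + A 1 1 = 2) : A ^ 7 = 1 := by
  have hd := det_eq A
  have hsq : ((A : Matrix (Fin 2) (Fin 2) (ZMod 7)) - 1)^2 = 0 := by
    ext i j
    fin_cases i <;> fin_cases j <;>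
      simp [pow_two, Matrix.mul_apply, Fin.sum_univ_two]
    · linear_combination -hd + A 0 0 * h
    · linear_combination A 0 1 * h
    · linear_combination A 1 0 * h
    · linear_combination -hd + A 1 1 * h
  have : Fact (Nat.Prime 7) := ⟨by norm_num⟩
  have h7 := sub_pow_char_of_commute 7
    (Commute.one_right (A : Matrix (Fin 2) (Fin 2) (ZMod 7)))
  have h0 : ((A : Matrix (Fin 2) (Fin 2) (ZMod 7)) - 1)^7 = 0 :=
    pow_eq_zero_of_le (by norm_num : 2 ≤ 7) hsq
  rw [h0, one_pow] at h7
  apply Subtype.ext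
  rw [Matrix.SpecialLinearGroup.coe_pow]
  exact (sub_eq_zero.1 h7.symm)

theorem pow7 (A : SL2 7) (h : (A 0 0 + A 1 1)^2 = 4) : pr A ^ 7 = 1 := by
  have key : ∀ t : ZMod 7, t^2 = 4 → t = 2 ∨ -t = 2 := by decide
  rcases key _ h with h | h
  · rw [← map_pow, pow7_aux A h, map_one]
  · rw [← pr_neg, ← map_pow, pow7_aux (-A) (by simp; linear_combination h), map_one]

/-- number of fixed points -/
noncomputable def fx (H : Subgroup (PSL2 7)) (x : PSL2 7) : ℕ := Nat.card (fixedBy (PSL2 7 ⧸ H) x)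

theorem fx_conj (H : Subgroup (PSL2 7)) {x y : PSL2 7} (h : IsConj x y) : fx H x = fx H y := by
  obtain ⟨c, rfl⟩ := isConj_iff.1 h
  refine Nat.card_congr ((MulAction.toPerm c).subtypeEquiv ?_)
  intro a
  simp [mem_fixedBy, mul_smul]

theorem fx_comp (H : Subgroup (PSL2 7)) (A : SL2 7) (h : (A 0 0 + A 1 1)^2 ≠ 4) :
    fx H (pr A) = fx H (pr (comp (A 0 0 + A 1 1))) :=
  fx_conj H (MonoidHom.map_isConj pr (conj_comp A h))

theorem fx_comp_neg (H : Subgroup (PSL2 7)) (t : ZMod 7) (h : t^2 ≠ 4) :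
    fx H (pr (comp (-t))) = fx H (pr (comp t)) := by
  have e : (-comp t) 0 0 + (-comp t) 1 1 = -t := by
    change -0 + -t = -t
    simp
  rw [← pr_neg (comp t), fx_comp H (-comp t) (by rw [e]; simpa using h), e]

theorem card_S : Nat.card (SL2 7) = 336 := by
  rw [Nat.card_congr eqv, Nat.card_eq_fintype_card, card_V]

theorem card_G : Nat.card (PSL2 7) ∣ 336 := by
  rw [← card_S]; exact Subgroup.card_quotient_dvd_card _

theorem fx_uni (H : Subgroup (PSL2 7)) (hH : H.index = 7) (A : SL2 7)
    (h : (A 0 0 + A 1 1)^2 = 4) (hn : ¬ (A 0 1 = 0 ∧ A 1 0 = 0)) : fx H (pr A) = 0 := by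
  rw [fx, Nat.card_eq_zero]
  left
  refine ⟨fun ⟨z, hz⟩ => ?_⟩
  have : Fact (Nat.Prime 7) := ⟨by norm_num⟩
  have ho : orderOf (pr A) = 7 :=
    orderOf_eq_prime (pow7 A h) (fun h1 => hn (of_pr_eq_one A h1))
  have h1 : 7 ∣ Nat.card (stabilizer (PSL2 7) z) := by
    exact (dvd_of_eq ho.symm).trans <| Subgroup.orderOf_dvd_natCard (stabilizer (PSL2 7) z) (x := pr A) hz
  have h2 := (stabilizer (PSL2 7) z).card_mul_index
  rw [index_stabilizer_of_transitive, ← Subgroup.index, hH] at h2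
  have h3 : 7 * 7 ∣ 336 := (Nat.mul_dvd_mul_right h1 7).trans (h2 ▸ card_G)
  norm_num at h3

theorem fx_one (H : Subgroup (PSL2 7)) (hH : H.index = 7) : fx H 1 = 7 := by
  refine Eq.trans ?_ hH
  exact Nat.card_congr (Equiv.subtypeUnivEquiv (fun z => one_smul _ z))

theorem fx_W (H : Subgroup (PSL2 7)) (hH : H.index = 7) (A : SL2 7) :
    fx H (pr A) = W (fx H (pr (comp 0))) (fx H (pr (comp 1))) (fx H (pr (comp 3)))
      (A 0 0) (A 0 1) (A 1 0) (A 1 1) := by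
  by_cases h4 : (A 0 0 + A 1 1)^2 = 4
  · have k : ∀ t : ZMod 7, t^2 = 4 → t ≠ 0 ∧ t^2 ≠ 1 ∧ t^2 ≠ 2 := by decide
    obtain ⟨k0, k1, k2⟩ := k _ h4
    unfold W
    rw [if_neg k0, if_neg k1, if_neg k2]
    simp only [h4, true_and]
    by_cases hn : A 0 1 = 0 ∧ A 1 0 = 0
    · rw [pr_eq_one_of A h4 hn.1 hn.2, fx_one H hH]; simp [hn]
    · rw [fx_uni H hH A h4 hn]; simp [hn]
  · rw [fx_comp H A h4]
    have k : ∀ t : ZMod 7, t^2 ≠ 4 → t = 0 ∨ t = 1 ∨ t = -1 ∨ t = 3 ∨ t = -3 := by decide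
    have e1 := fx_comp_neg H 1 (by decide)
    have e3 := fx_comp_neg H 3 (by decide)
    rcases k _ h4 with h | h | h | h | h <;> rw [h] <;> unfold W <;> rw [h]
    · rw [if_pos rfl, if_neg (by decide), if_neg (by decide),
        if_neg (fun h => absurd h.1 (by decide))]; simp
    · rw [if_neg (by decide), if_pos (by decide), if_neg (by decide),
        if_neg (fun h => absurd h.1 (by decide))]; simp
    · rw [if_neg (by decide), if_pos (by decide), if_neg (by decide),
        if_neg (fun h => absurd h.1 (by decide)), e1]; simp
    · rw [if_neg (by decide), if_neg (by decide), if_pos (by decide),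
        if_neg (fun h => absurd h.1 (by decide))]; simp
    · rw [if_neg (by decide), if_neg (by decide), if_pos (by decide),
        if_neg (fun h => absurd h.1 (by decide)), e3]; simp

theorem burnside (H : Subgroup (PSL2 7)) : ∑ A : SL2 7, fx H (pr A) = 336 := by
  classical
  letI : MulAction (SL2 7) (PSL2 7 ⧸ H) := MulAction.compHom _ pr
  have hp : IsPretransitive (SL2 7) (PSL2 7 ⧸ H) := ⟨fun x y => by
    obtain ⟨g, hg⟩ := exists_smul_eq (PSL2 7) x y
    obtain ⟨A, rfl⟩ := pr_surj g
    exact ⟨A, hg⟩⟩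
  have : Finite (PSL2 7 ⧸ H) := Quotient.finite _
  have : Fintype (PSL2 7 ⧸ H) := Fintype.ofFinite _
  have : Fintype (Quotient (orbitRel (SL2 7) (PSL2 7 ⧸ H))) := Fintype.ofFinite _
  have h := sum_card_fixedBy_eq_card_orbits_mul_card_group (SL2 7) (PSL2 7 ⧸ H)
  have h1 : Fintype.card (Quotient (orbitRel (SL2 7) (PSL2 7 ⧸ H))) = 1 := by
    have := (pretransitive_iff_subsingleton_quotient (SL2 7) (PSL2 7 ⧸ H)).1 hp
    have : Nonempty (Quotient (orbitRel (SL2 7) (PSL2 7 ⧸ H))) := ⟨Quotient.mk _ (1 : PSL2 7)⟩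
    exact Fintype.card_eq_one_iff_nonempty_unique.2 ⟨Unique.mk' _⟩
  have hS : Fintype.card (SL2 7) = 336 := (Fintype.card_congr eqv).trans card_V
  rw [h1, hS] at h
  refine Eq.trans ?_ h
  refine Finset.sum_congr rfl fun A _ => ?_
  rw [fx, ← Nat.card_eq_fintype_card]
  rfl

theorem sum_eq (H : Subgroup (PSL2 7)) (hH : H.index = 7) :
    42 * fx H (pr (comp 0)) + 112 * fx H (pr (comp 1)) + 84 * fx H (pr (comp 3)) + 14 = 336 := by
  rw [← sum_W, ← burnside H, ← eqv.sum_comp]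
  exact Finset.sum_congr rfl fun A _ => (fx_W H hH A).symm

theorem fx_le (H : Subgroup (PSL2 7)) : fx H (pr (comp 3)) ≤ fx H (pr (comp 0)) := by
  have : Finite (PSL2 7 ⧸ H) := Quotient.finite _
  have h : fx H (pr (comp 3 ^ 2)) = fx H (pr (comp 0)) := by
    have e : (comp 3 ^ 2) 0 0 + (comp 3 ^ 2) 1 1 = 0 := by decide
    rw [fx_comp H (comp 3 ^ 2) (by rw [e]; decide), e]
  rw [← h]
  refine Nat.card_mono (Set.toFinite _) fun z hz => ?_
  rw [mem_fixedBy] at hz ⊢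
  rw [map_pow, pow_two, mul_smul, hz, hz]

theorem fx_odd (H : Subgroup (PSL2 7)) (hH : H.index = 7) : 7 ≡ fx H (pr (comp 3)) [MOD 2] := by
  classical
  have : Finite (PSL2 7 ⧸ H) := Quotient.finite _
  have : Fintype (PSL2 7 ⧸ H) := Fintype.ofFinite _
  have h4 : pr (comp 3) ^ 4 = 1 := by
    have e : comp 3 ^ 4 = -1 := by decide
    rw [← map_pow, e, pr_neg, map_one]
  have key := Equiv.Perm.card_fixedPoints_modEq (α := PSL2 7 ⧸ H)
    (f := MulAction.toEndHom (pr (comp 3))) (p := 2) (n := 2)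
    (by rw [← map_pow]; exact (congrArg _ h4).trans (map_one _))
  have e1 : Fintype.card (PSL2 7 ⧸ H) = 7 := by
    rw [← Nat.card_eq_fintype_card]; exact hH
  rw [e1] at key
  refine key.trans ?_
  rw [fx, Fintype.card_eq_nat_card]
  rfl

theorem fx_vals (H : Subgroup (PSL2 7)) (hH : H.index = 7) :
    fx H (pr (comp 0)) = 3 ∧ fx H (pr (comp 1)) = 1 ∧ fx H (pr (comp 3)) = 1 := by
  have h1 := sum_eq H hH
  have h2 := fx_le H
  have h3 := fx_odd H hH
  unfold Nat.ModEq at h3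
  omega

theorem fx_eq (H K : Subgroup (PSL2 7)) (hH : H.index = 7) (hK : K.index = 7) (x : PSL2 7) :
    fx H x = fx K x := by
  obtain ⟨A, rfl⟩ := pr_surj x
  obtain ⟨a, b, c⟩ := fx_vals H hH
  obtain ⟨a', b', c'⟩ := fx_vals K hK
  rw [fx_W H hH, fx_W K hK, a, b, c, a', b', c']

theorem count1 {G : Type*} [Group G] (H : Subgroup G) (x : G) :
    Nat.card {g : G // g⁻¹ * x * g ∈ H} = Nat.card H * Nat.card (fixedBy (G ⧸ H) x) := by
  rw [← Nat.card_prod]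
  refine Nat.card_congr (Equiv.trans (Equiv.subtypeEquivRight fun g => ?_)
    (QuotientGroup.preimageMkEquivSubgroupProdSet H (fixedBy (G ⧸ H) x)))
  rw [Set.mem_preimage, mem_fixedBy, eq_comm, MulAction.Quotient.smul_coe, QuotientGroup.eq,
    smul_eq_mul, mul_assoc]

theorem count2 {G : Type*} [Group G] [Finite G] (H : Subgroup G) (x : G) :
    Nat.card {g : G // g⁻¹ * x * g ∈ H} =
      Nat.card {y : G // IsConj x y ∧ y ∈ H} * Nat.card {g : G // g⁻¹ * x * g = x} := by
  rw [← Nat.card_prod]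
  have hc : ∀ y : {y : G // IsConj x y ∧ y ∈ H}, ∃ c : G, c⁻¹ * x * c = y.1 := by
    rintro ⟨y, hy, -⟩
    obtain ⟨c, hc⟩ := isConj_iff.1 hy
    exact ⟨c⁻¹, by simpa using hc⟩
  choose c hc using hc
  have hk : ∀ g : G, IsConj x (g⁻¹ * x * g) := fun g => isConj_iff.2 ⟨g⁻¹, by simp⟩
  refine Nat.card_congr
    { toFun := fun g => (⟨g.1⁻¹ * x * g.1, hk _, g.2⟩,
        ⟨g.1 * (c ⟨g.1⁻¹ * x * g.1, hk _, g.2⟩)⁻¹, ?_⟩)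
      invFun := fun p => ⟨p.2.1 * c p.1, ?_⟩
      left_inv := ?_
      right_inv := ?_ }
  · have := hc ⟨g.1⁻¹ * x * g.1, hk _, g.2⟩
    generalize c ⟨g.1⁻¹ * x * g.1, hk _, g.2⟩ = d at *
    have h2 : x = d * (g.1⁻¹ * x * g.1) * d⁻¹ := by rw [← show d⁻¹ * x * d = g.1⁻¹ * x * g.1 from this]; group
    conv_rhs => rw [h2]
    group
  · have h1 := hc p.1
    have h2 := p.2.2
    have : (p.2.1 * c p.1)⁻¹ * x * (p.2.1 * c p.1) = p.1.1 := by
      rw [← h1]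
      generalize c p.1 = d
      generalize p.2.1 = g at *
      rw [show (g * d)⁻¹ * x * (g * d) = d⁻¹ * (g⁻¹ * x * g) * d by group, h2]
    rw [this]; exact p.1.2.2
  · intro g; simp
  · rintro ⟨y, g, hg⟩
    have h1 := hc y
    have : (g * c y)⁻¹ * x * (g * c y) = y.1 := by
      rw [← h1]
      generalize c y = d
      rw [show (g * d)⁻¹ * x * (g * d) = d⁻¹ * (g⁻¹ * x * g) * d by group, hg]
    have e : ∀ h, (⟨(g * c y)⁻¹ * x * (g * c y), h⟩ : {y : G // IsConj x y ∧ y ∈ H}) = y :=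
      fun h => Subtype.ext this
    simp only [Prod.mk.injEq, Subtype.mk.injEq]
    exact ⟨e _, by rw [e]; group⟩

end PSL7

/-- If `H₁` and `H₂` are subgroups of `PSL(2,7)` of index 7 that are not
conjugate in `PSL(2,7)`, then for every conjugacy class `C` of `PSL(2,7)` one has
`|C ∩ H₁| = |C ∩ H₂|`; i.e. `(H₁, H₂)` is an almost conjugate (Sunada) pair. -/
theorem stmt_3 (H₁ H₂ : Subgroup (PSL2 7))
    (h₁ : H₁.index = 7) (h₂ : H₂.index = 7)
    (hnc : ¬ ∃ g : PSL2 7, Subgroup.map (MulAut.conj g).toMonoidHom H₁ = H₂) :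
    ∀ x : PSL2 7, Nat.card {y : PSL2 7 // IsConj x y ∧ y ∈ H₁} =
      Nat.card {y : PSL2 7 // IsConj x y ∧ y ∈ H₂} := by
  intro x
  have hcard : Nat.card H₁ = Nat.card H₂ := by
    have e1 := H₁.card_mul_index
    have e2 := H₂.card_mul_index
    rw [h₁] at e1
    rw [h₂] at e2
    omega
  have hf : Nat.card (MulAction.fixedBy (PSL2 7 ⧸ H₁) x)
      = Nat.card (MulAction.fixedBy (PSL2 7 ⧸ H₂) x) := PSL7.fx_eq H₁ H₂ h₁ h₂ x
  have a1 := PSL7.count1 H₁ x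
  have a2 := PSL7.count1 H₂ x
  rw [PSL7.count2, hcard, hf] at a1
  rw [PSL7.count2, ← a1] at a2
  have hpos : 0 < Nat.card {g : PSL2 7 // g⁻¹ * x * g = x} := by
    have : Nonempty {g : PSL2 7 // g⁻¹ * x * g = x} := ⟨⟨1, by simp⟩⟩
    exact Nat.card_pos
  exact (Nat.eq_of_mul_eq_mul_right hpos a2).symm
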